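/- A configuration c : ℤ^d → ℤ is sparse and periodic in direction v (for a nonzero v ∈ ℤ^d) if and only if c is a finite sum of periodic v-fibers. -/

import Mathlib

namespace PaperFormal

/-- View an integer vector inside `ℝ^d`. -/
def intVecR {d : ℕ} (u : Fin d → ℤ) : Fin d → ℝ := fun i => (u i : ℝ)

/-- View an integer vector inside `ℚ^d`. -/
def intVecQ {d : ℕ} (u : Fin d → ℤ) : Fin d → ℚ := fun i => (u i : ℚ)

/-- A (Laurent) polynomial: a finitely supported integer-valued function on `ℤ^d`. -/
def IsPoly {d : ℕ} (f : (Fin d → ℤ) → ℤ) : Prop := (Function.support f).Finite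

/-- The product `(fc)(u) = ∑_v f(v) · c(u − v)` of a polynomial `f` with `c : ℤ^d → ℤ`. -/
noncomputable def polyApply {d : ℕ} (f : (Fin d → ℤ) → ℤ) (c : (Fin d → ℤ) → ℤ) :
    (Fin d → ℤ) → ℤ := fun u => ∑ᶠ v, f v * c (u - v)

/-- The product `(fc)(u) = ∑_v f(v) · c(u − v)` of a polynomial `f` with `c : ℤ^d → ℂ`. -/
noncomputable def polyApplyC {d : ℕ} (f : (Fin d → ℤ) → ℤ) (c : (Fin d → ℤ) → ℂ) :
    (Fin d → ℤ) → ℂ := fun u => ∑ᶠ v, (f v : ℂ) * c (u - v)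

/-- `c` is `v`-periodic: `c(u + v) = c(u)` for all `u`. -/
def Periodic {d : ℕ} (c : (Fin d → ℤ) → ℤ) (v : Fin d → ℤ) : Prop := ∀ u, c (u + v) = c u

/-- `c : ℤ^d → ℂ` is `v`-periodic. -/
def PeriodicC {d : ℕ} (c : (Fin d → ℤ) → ℂ) (v : Fin d → ℤ) : Prop := ∀ u, c (u + v) = c u

/-- `c` is `k`-periodic: it has `k` periods that are linearly independent over `ℚ`. -/
def KPeriodic {d : ℕ} (k : ℕ) (c : (Fin d → ℤ) → ℤ) : Prop :=
  ∃ v : Fin k → (Fin d → ℤ),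
    (LinearIndependent ℚ fun i => intVecQ (v i)) ∧ ∀ i, Periodic c (v i)

/-- `c` is strongly periodic: it is `d`-periodic. -/
def StronglyPeriodic {d : ℕ} (c : (Fin d → ℤ) → ℤ) : Prop := KPeriodic d c

/-- `c : ℤ^d → ℂ` is strongly periodic. -/
def StronglyPeriodicC {d : ℕ} (c : (Fin d → ℤ) → ℂ) : Prop :=
  ∃ v : Fin d → (Fin d → ℤ),
    (LinearIndependent ℚ fun i => intVecQ (v i)) ∧ ∀ i, PeriodicC c (v i)

/-- Two nonzero integer vectors are non-parallel if they are linearly independent over `ℚ`. -/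
def NonParallel {d : ℕ} (v w : Fin d → ℤ) : Prop :=
  LinearIndependent ℚ ![intVecQ v, intVecQ w]

/-- A line polynomial in direction `v`: a polynomial whose support contains at least two points
and is contained in `u + ℚv` for some `u ∈ ℤ^d`. -/
def IsLinePoly {d : ℕ} (f : (Fin d → ℤ) → ℤ) (v : Fin d → ℤ) : Prop :=
  IsPoly f ∧ v ≠ 0 ∧ 2 ≤ (Function.support f).ncard ∧
    ∃ u : Fin d → ℤ, ∀ w ∈ Function.support f, ∃ q : ℚ, intVecQ w = intVecQ u + q • intVecQ v

/-- The difference polynomial `X^v − 1`: value `1` at `v`, value `−1` at `0`, and `0` elsewhere. -/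
def diffPoly {d : ℕ} (v : Fin d → ℤ) : (Fin d → ℤ) → ℤ :=
  fun u => if u = v then 1 else if u = 0 then -1 else 0

/-- `c : ℤ^d → ℂ` is periodic in direction `v`: it is `kv`-periodic for some nonzero integer `k`. -/
def PeriodicInDirC {d : ℕ} (c : (Fin d → ℤ) → ℂ) (v : Fin d → ℤ) : Prop :=
  ∃ k : ℤ, k ≠ 0 ∧ PeriodicC c (k • v)

/-- `c : ℤ^d → ℂ` is `V`-periodic for a linear subspace `V ⊆ ℝ^d`: it is periodic in
direction `v` for every nonzero integer vector `v` lying in `V`. -/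
def VPeriodicC {d : ℕ} (V : Submodule ℝ (Fin d → ℝ)) (c : (Fin d → ℤ) → ℂ) : Prop :=
  ∀ v : Fin d → ℤ, v ≠ 0 → intVecR v ∈ V → PeriodicInDirC c v

/-- The discrete cube `C_m + t`. -/
def cube {d : ℕ} (m : ℕ) (t : Fin d → ℤ) : Set (Fin d → ℤ) :=
  {u | ∀ i, |u i - t i| ≤ (m : ℤ)}

/-- `c : ℤ^d → ℤ` is sparse: for some positive integer `a`,
`|supp(c) ∩ (C_m + t)| ≤ a·m` for all positive `m` and all `t`. -/
def Sparse {d : ℕ} (c : (Fin d → ℤ) → ℤ) : Prop :=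
  ∃ a : ℕ, 0 < a ∧ ∀ m : ℕ, 0 < m → ∀ t : Fin d → ℤ,
    (Function.support c ∩ cube m t).ncard ≤ a * m

/-- A `v`-fiber: a function whose support is contained in `w + ℚv` for some `w ∈ ℤ^d`. -/
def IsFiber {d : ℕ} (e : (Fin d → ℤ) → ℤ) (v : Fin d → ℤ) : Prop :=
  ∃ w : Fin d → ℤ, ∀ x ∈ Function.support e, ∃ q : ℚ, intVecQ x = intVecQ w + q • intVecQ v

/-- `c` is a sum of finitely many periodic `v`-fibers. -/
def FinSumPeriodicFibers {d : ℕ} (v : Fin d → ℤ) (c : (Fin d → ℤ) → ℤ) : Prop :=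
  ∃ (r : ℕ) (e : Fin r → ((Fin d → ℤ) → ℤ)), c = ∑ j, e j ∧
    ∀ j, IsFiber (e j) v ∧ ∃ w : Fin d → ℤ, w ≠ 0 ∧ Periodic (e j) w

end PaperFormal

namespace PaperFormal

/-!
Both sides are equivalent to: `c` is periodic in direction `v` and its support meets only finitely
many of the lines `u + ℚv`. Each such line meets `C_m + t` in at most `2m + 1` points, so finitely
many lines make `c` sparse. Conversely, let `c` be sparse with a period `w = kv`, and pick support
points on `N` distinct lines, all of norm at most `B`. Their translates by `0, w, …, nw` are
`N(n + 1)` support points in a cube of radius `B + n‖w‖`, so `N(n + 1) ≤ a(B + n‖w‖)`, and letting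
`n` grow bounds `N` by `a‖w‖`.
-/

variable {d : ℕ} {c e : (Fin d → ℤ) → ℤ} {v w x y : Fin d → ℤ}

theorem cube_eq_closedBall (m : ℕ) (t : Fin d → ℤ) : cube m t = Metric.closedBall t m := by
  ext u
  simp only [cube, Set.mem_ofPred_eq, mem_closedBall_iff_norm,
    pi_norm_le_iff_of_nonneg (Nat.cast_nonneg m), Pi.sub_apply, Int.norm_eq_abs]
  exact forall_congr' fun i => by norm_cast

theorem finite_cube (m : ℕ) (t : Fin d → ℤ) : (cube m t).Finite := by
  rw [cube_eq_closedBall]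
  exact (isCompact_closedBall t m).finite_of_discrete

theorem add_nsmul_mem_cube {B M l n : ℕ} (hx : ‖x‖ ≤ B) (hw : ‖w‖ ≤ M) (hl : l ≤ n) :
    x + l • w ∈ cube (B + n * M) 0 := by
  rw [cube_eq_closedBall, mem_closedBall_zero_iff]
  push_cast
  calc ‖x + l • w‖ ≤ ‖x‖ + l * ‖w‖ := (norm_add_le _ _).trans (by gcongr; exact norm_nsmul_le)
    _ ≤ B + n * M := by gcongr

section Counting

variable {β : Type*} {g : (Fin d → ℤ) → β} {F : Finset (Fin d → ℤ)}

theorem injOn_add_nsmul {E : Type*} [AddLeftCancelMonoid E] {g : E → β} {w : E}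
    (hw : ¬IsOfFinAddOrder w) (hg : Function.Periodic g w) {S : Set E} (hS : Set.InjOn g S)
    (s : Set ℕ) :
    Set.InjOn (fun p : E × ℕ => p.1 + p.2 • w) (S ×ˢ s) := by
  rintro ⟨x, l⟩ hx ⟨y, l'⟩ hy hxy
  have hgxy : g x = g y := by
    rw [← hg.nsmul l x, ← hg.nsmul l' y]
    exact congrArg g hxy
  obtain rfl : x = y := hS hx.1 hy.1 hgxy
  obtain rfl : l = l' := injective_nsmul_iff_not_isOfFinAddOrder.2 hw (add_left_cancel hxy)
  rfl

theorem card_mul_succ_le_ncard_support_inter_cube (hw : w ≠ 0) (hc : Periodic c w)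
    (hg : Function.Periodic g w) (hF : Set.InjOn g F) (hFc : ↑F ⊆ Function.support c) {B M : ℕ}
    (hB : ∀ x ∈ F, ‖x‖ ≤ B) (hM : ‖w‖ ≤ M) (n : ℕ) :
    F.card * (n + 1) ≤ (Function.support c ∩ cube (B + n * M) 0).ncard := by
  have hmaps : ∀ p ∈ (F : Set (Fin d → ℤ)) ×ˢ (Finset.range (n + 1) : Set ℕ),
      p.1 + p.2 • w ∈ Function.support c ∩ cube (B + n * M) 0 := by
    rintro ⟨x, l⟩ ⟨hx, hl⟩
    refine ⟨?_, add_nsmul_mem_cube (hB x hx) hM (Finset.mem_range_succ_iff.1 hl)⟩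
    rw [Function.mem_support, Function.Periodic.nsmul hc l x]
    exact hFc hx
  have hcard := Set.ncard_le_ncard_of_injOn _ hmaps
    (injOn_add_nsmul (not_isOfFinAddOrder_of_isAddTorsionFree hw) hg hF _)
    ((finite_cube _ _).subset Set.inter_subset_right)
  rwa [← Finset.coe_product, Set.ncard_coe_finset, Finset.card_product,
    Finset.card_range] at hcard

theorem card_le_mul_of_injOn {a : ℕ}
    (ha : ∀ m : ℕ, 0 < m → ∀ t, (Function.support c ∩ cube m t).ncard ≤ a * m)
    (hw : w ≠ 0) (hc : Periodic c w) (hg : Function.Periodic g w) (hF : Set.InjOn g F)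
    (hFc : ↑F ⊆ Function.support c) {M : ℕ} (hM : ‖w‖ ≤ M) : F.card ≤ a * M := by
  obtain ⟨B, hB⟩ : ∃ B : ℕ, ∀ x ∈ F, ‖x‖ ≤ B := by
    obtain ⟨b, hb⟩ := F.finite_toSet.isBounded.exists_norm_le
    obtain ⟨B, hbB⟩ := exists_nat_ge b
    exact ⟨B, fun x hx => (hb x hx).trans hbB⟩
  have hMpos : 0 < M := by exact_mod_cast (norm_pos_iff.2 hw).trans_le hM
  -- Since `a * B ≤ n`, the term `a * B` is absorbed; the `+ 1` only makes the radius positive.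
  set n := a * B + 1 with hn
  have hcount : F.card * (n + 1) < (a * M + 1) * (n + 1) :=
    calc F.card * (n + 1) ≤ (Function.support c ∩ cube (B + n * M) 0).ncard :=
          card_mul_succ_le_ncard_support_inter_cube hw hc hg hF hFc hB hM n
      _ ≤ a * (B + n * M) := ha _ (by positivity) 0
      _ < (a * M + 1) * (n + 1) := by nlinarith [Nat.zero_le (a * M)]
  exact Nat.lt_succ_iff.1 (Nat.lt_of_mul_lt_mul_right hcount)

theorem Sparse.finite_image_support (hs : Sparse c) (hw : w ≠ 0) (hc : Periodic c w)
    (hg : Function.Periodic g w) : (g '' Function.support c).Finite := by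
  obtain ⟨a, -, ha⟩ := hs
  obtain ⟨M, hM⟩ := exists_nat_ge ‖w‖
  obtain ⟨s, hsc, hbij⟩ := Set.exists_subset_bijOn (Function.support c) g
  rw [← hbij.image_eq]
  refine Set.Finite.image g (Set.not_infinite.1 fun hinf => ?_)
  obtain ⟨F, hFs, hFcard⟩ := hinf.exists_subset_card_eq (a * M + 1)
  have := card_le_mul_of_injOn ha hw hc hg (hbij.injOn.mono hFs) (hFs.trans hsc) hM
  lia

end Counting

/-- The line `x + ℚv` through an integer point `x`, encoded as the class of `x` in `ℚ^d ⧸ ℚv`;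
additive in `x`, so that translations by multiples of `v` act trivially. -/
def lineClass (v : Fin d → ℤ) :
    (Fin d → ℤ) →+ (Fin d → ℚ) ⧸ Submodule.span ℚ {intVecQ v} :=
  (Submodule.span ℚ {intVecQ v}).mkQ.toAddMonoidHom.comp
    ((Int.castAddHom ℚ).compLeft (Fin d))

theorem lineClass_eq_lineClass_iff :
    lineClass v x = lineClass v y ↔ ∃ q : ℚ, intVecQ x = intVecQ y + q • intVecQ v := by
  refine (Submodule.Quotient.eq _).trans (Submodule.mem_span_singleton.trans ?_)
  exact exists_congr fun q => by rw [eq_comm, sub_eq_iff_eq_add']; rfl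

theorem periodic_lineClass_zsmul (k : ℤ) : Function.Periodic (lineClass v) (k • v) := by
  refine Function.Periodic.zsmul (fun u => ?_) k
  exact lineClass_eq_lineClass_iff.2 ⟨1, by ext i; simp [intVecQ]⟩

theorem eq_of_lineClass_eq {i : Fin d} (hi : v i ≠ 0) (hxy : lineClass v x = lineClass v y)
    (hxyi : x i = y i) : x = y := by
  obtain ⟨q, hq⟩ := lineClass_eq_lineClass_iff.1 hxy
  have hq0 : q = 0 := by simpa [intVecQ, hxyi, hi] using congrFun hq i
  ext j
  simpa [intVecQ, hq0] using congrFun hq j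

theorem exists_zsmul_eq_zsmul_of_lineClass_eq_zero (hw : w ≠ 0) (h : lineClass v w = 0) :
    ∃ k n : ℤ, k ≠ 0 ∧ k • v = n • w := by
  obtain ⟨q, hq⟩ := lineClass_eq_lineClass_iff.1 (h.trans (map_zero _).symm)
  have hwq (i : Fin d) : (w i : ℚ) = q * v i := by simpa [intVecQ] using congrFun hq i
  refine ⟨q.num, q.den, fun hnum => hw ?_, ?_⟩
  · ext i
    simpa [Rat.num_eq_zero.1 hnum] using hwq i
  · ext i
    have : (q.num * v i : ℚ) = q.den * w i := by rw [hwq, ← mul_assoc, Rat.den_mul_eq_num]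
    exact_mod_cast this

theorem isFiber_iff_exists_lineClass_eq :
    IsFiber e v ↔ ∃ w, ∀ x ∈ Function.support e, lineClass v x = lineClass v w := by
  simp only [IsFiber, lineClass_eq_lineClass_iff]

theorem IsFiber.finite_lineClass_image_support (he : IsFiber e v) :
    (lineClass v '' Function.support e).Finite := by
  obtain ⟨w, hw⟩ := isFiber_iff_exists_lineClass_eq.1 he
  exact (Set.finite_singleton (lineClass v w)).subset (Set.image_subset_iff.2 hw)

theorem IsFiber.exists_periodic_zsmul (he : IsFiber e v) (hw : w ≠ 0) (hp : Periodic e w) :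
    ∃ k : ℤ, k ≠ 0 ∧ Periodic e (k • v) := by
  obtain ⟨z, hz⟩ := isFiber_iff_exists_lineClass_eq.1 he
  obtain rfl | he0 := eq_or_ne e 0
  · exact ⟨1, one_ne_zero, fun _ => rfl⟩
  obtain ⟨x, hx⟩ := Function.ne_iff.1 he0
  have hxw : x + w ∈ Function.support e := by rwa [Function.mem_support, hp x]
  have hw0 : lineClass v w = 0 := by
    simpa using (hz (x + w) hxw).trans (hz x hx).symm
  obtain ⟨k, n, hk, hkn⟩ := exists_zsmul_eq_zsmul_of_lineClass_eq_zero hw hw0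
  exact ⟨k, hk, hkn ▸ Function.Periodic.zsmul hp n⟩

theorem sparse_of_finite_lineClass_image_support (hv : v ≠ 0)
    (hfin : (lineClass v '' Function.support c).Finite) : Sparse c := by
  obtain ⟨i, hi⟩ := Function.ne_iff.1 hv
  set T := hfin.toFinset with hT
  refine ⟨3 * T.card + 1, Nat.succ_pos _, fun m hm t => ?_⟩
  have hmaps : ∀ x ∈ Function.support c ∩ cube m t,
      (lineClass v x, x i) ∈ (T ×ˢ Finset.Icc (t i - m) (t i + m) : Finset _) := by
    rintro x ⟨hxc, hxt⟩
    have hxi := abs_le.1 (hxt i)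
    rw [Finset.mem_product, Finset.mem_Icc, hT, hfin.mem_toFinset]
    exact ⟨Set.mem_image_of_mem _ hxc, by lia, by lia⟩
  calc (Function.support c ∩ cube m t).ncard
      ≤ (T ×ˢ Finset.Icc (t i - m) (t i + m) : Finset _).card := by
        rw [← Set.ncard_coe_finset]
        refine Set.ncard_le_ncard_of_injOn _ hmaps (fun x _ y _ hxy => ?_)
          (Finset.finite_toSet _)
        exact eq_of_lineClass_eq hi (congrArg Prod.fst hxy) (congrArg Prod.snd hxy)
    _ = T.card * (2 * m + 1) := by
        rw [Finset.card_product, Int.card_Icc]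
        congr 1
        lia
    _ ≤ (3 * T.card + 1) * m := by nlinarith [Nat.mul_le_mul_left T.card hm]

theorem sparse_iff_finite_lineClass_image_support (hv : v ≠ 0) {k : ℤ} (hk : k ≠ 0)
    (hp : Periodic c (k • v)) : Sparse c ↔ (lineClass v '' Function.support c).Finite :=
  ⟨fun hs => hs.finite_image_support (smul_ne_zero hk hv) hp (periodic_lineClass_zsmul k),
    sparse_of_finite_lineClass_image_support hv⟩

theorem sum_indicator_preimage_singleton {α β M : Type*} [AddCommMonoid M] (f : α → M) (g : α → β)
    (T : Finset β) (hT : g '' Function.support f ⊆ T) :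
    ∑ b ∈ T, (g ⁻¹' {b}).indicator f = f := by
  classical
  ext x
  simp only [Finset.sum_apply, Set.indicator_apply, Set.mem_preimage, Set.mem_singleton_iff,
    Finset.sum_ite_eq, ite_eq_left_iff]
  intro hx
  by_contra hfx
  exact hx (hT ⟨x, Ne.symm hfx, rfl⟩)

theorem Periodic.indicator_preimage {β : Type*} {g : (Fin d → ℤ) → β} (hc : Periodic c w)
    (hg : Function.Periodic g w) (s : Set β) : Periodic ((g ⁻¹' s).indicator c) w := by
  classical
  intro u
  simp only [Set.indicator_apply, Set.mem_preimage, hg u, hc u]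

theorem isFiber_indicator_preimage_lineClass (w : Fin d → ℤ) :
    IsFiber ((lineClass v ⁻¹' {lineClass v w}).indicator c) v :=
  isFiber_iff_exists_lineClass_eq.2 ⟨w, fun x hx =>
    (Set.support_indicator_subset hx : x ∈ lineClass v ⁻¹' {lineClass v w})⟩

theorem finSumPeriodicFibers_of_finite_lineClass_image_support (hv : v ≠ 0)
    (hfin : (lineClass v '' Function.support c).Finite) {k : ℤ} (hk : k ≠ 0)
    (hp : Periodic c (k • v)) : FinSumPeriodicFibers v c := by
  set T := hfin.toFinset
  refine ⟨T.card, fun j => (lineClass v ⁻¹' {(T.equivFin.symm j).1}).indicator c, ?_, fun j => ?_⟩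
  · rw [T.equivFin.symm.sum_comp (fun b : T => (lineClass v ⁻¹' {b.1}).indicator c),
      Finset.sum_coe_sort T (fun b => (lineClass v ⁻¹' {b}).indicator c),
      sum_indicator_preimage_singleton c (lineClass v) T hfin.coe_toFinset.superset]
  · obtain ⟨z, -, hz⟩ := hfin.mem_toFinset.1 (T.equivFin.symm j).2
    refine ⟨?_, k • v, smul_ne_zero hk hv,
      hp.indicator_preimage (periodic_lineClass_zsmul k) _⟩
    simpa only [hz] using isFiber_indicator_preimage_lineClass (c := c) (v := v) z

theorem exists_periodic_zsmul_sum {ι : Type*} [Fintype ι] {e : ι → (Fin d → ℤ) → ℤ}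
    (he : ∀ j, ∃ k : ℤ, k ≠ 0 ∧ Periodic (e j) (k • v)) :
    ∃ k : ℤ, k ≠ 0 ∧ Periodic (∑ j, e j) (k • v) := by
  choose k hk hp using he
  refine ⟨∏ j, k j, Finset.prod_ne_zero_iff.2 fun j _ => hk j,
    Finset.univ.periodic_sum (f := e) fun j hj => ?_⟩
  obtain ⟨n, hn⟩ := Finset.dvd_prod_of_mem k hj
  rw [hn, mul_comm, mul_smul]
  exact Function.Periodic.zsmul (hp j) n

theorem finite_image_support_sum {ι α β M : Type*} [Fintype ι] [AddCommMonoid M]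
    {e : ι → α → M} {g : α → β} (he : ∀ j, (g '' Function.support (e j)).Finite) :
    (g '' Function.support (∑ j, e j)).Finite := by
  refine (Set.finite_iUnion he).subset ?_
  rw [← Set.image_iUnion]
  refine Set.image_mono fun x hx => Set.mem_iUnion.2 ?_
  rw [Function.mem_support, Finset.sum_apply] at hx
  obtain ⟨j, -, hj⟩ := Finset.exists_ne_zero_of_sum_ne_zero hx
  exact ⟨j, hj⟩

theorem FinSumPeriodicFibers.exists_periodic_zsmul (h : FinSumPeriodicFibers v c) :
    ∃ k : ℤ, k ≠ 0 ∧ Periodic c (k • v) := by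
  obtain ⟨r, e, rfl, he⟩ := h
  refine exists_periodic_zsmul_sum fun j => ?_
  obtain ⟨hfiber, w, hw, hp⟩ := he j
  exact hfiber.exists_periodic_zsmul hw hp

theorem FinSumPeriodicFibers.finite_lineClass_image_support (h : FinSumPeriodicFibers v c) :
    (lineClass v '' Function.support c).Finite := by
  obtain ⟨r, e, rfl, he⟩ := h
  exact finite_image_support_sum fun j => (he j).1.finite_lineClass_image_support

theorem sparse_and_periodic_iff_finite_sum_of_fibers_general (c : (Fin d → ℤ) → ℤ)
    (v : Fin d → ℤ) (hv : v ≠ 0) :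
    (Sparse c ∧ ∃ k : ℤ, k ≠ 0 ∧ Periodic c (k • v)) ↔ FinSumPeriodicFibers v c := by
  constructor
  · rintro ⟨hs, k, hk, hp⟩
    have hfin := (sparse_iff_finite_lineClass_image_support hv hk hp).1 hs
    exact finSumPeriodicFibers_of_finite_lineClass_image_support hv hfin hk hp
  · intro h
    obtain ⟨k, hk, hp⟩ := h.exists_periodic_zsmul
    have hs := (sparse_iff_finite_lineClass_image_support hv hk hp).2
      h.finite_lineClass_image_support
    exact ⟨hs, k, hk, hp⟩

/-- A configuration is sparse and periodic in direction `v` if and only if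
it is a finite sum of periodic `v`-fibers. -/
theorem sparse_and_periodic_iff_finite_sum_of_fibers
    {d : ℕ} (c : (Fin d → ℤ) → ℤ) (hconf : (Set.range c).Finite)
    (v : Fin d → ℤ) (hv : v ≠ 0) :
    (Sparse c ∧ ∃ k : ℤ, k ≠ 0 ∧ Periodic c (k • v)) ↔ FinSumPeriodicFibers v c :=
  sparse_and_periodic_iff_finite_sum_of_fibers_general c v hv

end PaperFormal
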